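/- arXiv:1202.0028 — 2 statements merged into one kernel-verified Lean document; each statement's English description precedes it below -/
import Mathlib

section
/- For all natural numbers n and λ, the coefficient of x^(n+λ) in (1+x+x^2)^n has the integral representation T(n, n+λ) = (1/π) · ∫_0^π cos(λφ) · (1 + 2·cos φ)^n dφ. -/
/-!
On the unit circle `z = e^{iφ}` one has `1 + z + z² = z (1 + 2 cos φ)`, so
`cos ((k - n) φ) (1 + 2 cos φ)^n` is the real part of `z^{-k} (1 + z + z²)^n`. Since `cos (m φ)`
integrates to `0` over `[0, π]` for every nonzero integer `m`, integrating the real part of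
`z^{-k} p(z)` over the half circle isolates the coefficient of `z^k` in a real polynomial `p`.
-/

open Polynomial Real

/-- `T n k` is the coefficient of `x^k` in `(1 + x + x^2)^n` over `ℤ`. -/
noncomputable def T (n k : ℕ) : ℤ := (((1 + X + X ^ 2 : ℤ[X])) ^ n).coeff k

lemma integral_cos_int_mul (m : ℤ) :
    ∫ φ in (0 : ℝ)..π, Real.cos (m * φ) = if m = 0 then π else 0 := by
  split_ifs with hm
  · simp [hm]
  · have hm' : (m : ℝ) ≠ 0 := Int.cast_ne_zero.2 hm
    simp [intervalIntegral.integral_comp_mul_left Real.cos hm', Real.sin_int_mul_pi]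

lemma re_exp_neg_mul_aeval_exp (p : ℝ[X]) (a φ : ℝ) :
    (Complex.exp ((-(a * φ) : ℝ) * Complex.I) * aeval (Complex.exp (φ * Complex.I)) p).re =
      ∑ j ∈ p.support, p.coeff j * Real.cos ((j - a) * φ) := by
  have exp_mul_pow (j : ℕ) :
      Complex.exp ((-(a * φ) : ℝ) * Complex.I) * Complex.exp (φ * Complex.I) ^ j =
        Complex.exp (((j - a) * φ : ℝ) * Complex.I) := by
    rw [← Complex.exp_nat_mul, ← Complex.exp_add]
    push_cast
    ring_nf
  rw [aeval_def, eval₂_eq_sum, Polynomial.sum, Finset.mul_sum, Complex.re_sum]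
  refine Finset.sum_congr rfl fun j _ => ?_
  rw [mul_left_comm, exp_mul_pow, Complex.coe_algebraMap, Complex.re_ofReal_mul,
    Complex.exp_ofReal_mul_I_re]

lemma integral_re_exp_neg_mul_aeval_exp (p : ℝ[X]) (k : ℕ) :
    ∫ φ in (0 : ℝ)..π,
        (Complex.exp ((-(k * φ) : ℝ) * Complex.I) * aeval (Complex.exp (φ * Complex.I)) p).re =
      π * p.coeff k := by
  have integral_cos_sub_mul (j : ℕ) :
      ∫ φ in (0 : ℝ)..π, Real.cos ((j - k) * φ) = if j = k then π else 0 := by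
    simpa [sub_eq_zero] using integral_cos_int_mul (j - k)
  simp_rw [re_exp_neg_mul_aeval_exp]
  rw [intervalIntegral.integral_finsetSum
    fun j _ => (by fun_prop : Continuous _).intervalIntegrable _ _]
  simp_rw [intervalIntegral.integral_const_mul, integral_cos_sub_mul]
  simp +contextual [mul_comm]

lemma one_add_exp_mul_I_add_sq (z : ℂ) :
    1 + Complex.exp (z * Complex.I) + Complex.exp (z * Complex.I) ^ 2 =
      Complex.exp (z * Complex.I) * (1 + 2 * Complex.cos z) := by
  have exp_mul_exp_neg : Complex.exp (z * Complex.I) * Complex.exp (-z * Complex.I) = 1 := by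
    rw [← Complex.exp_add, neg_mul, add_neg_cancel, Complex.exp_zero]
  rw [Complex.two_cos]
  linear_combination -exp_mul_exp_neg

lemma cos_mul_one_add_two_cos_pow (n : ℕ) (a φ : ℝ) :
    Real.cos ((a - n) * φ) * (1 + 2 * Real.cos φ) ^ n =
      (Complex.exp ((-(a * φ) : ℝ) * Complex.I) *
        aeval (Complex.exp (φ * Complex.I)) ((1 + X + X ^ 2 : ℝ[X]) ^ n)).re := by
  have factorization :
      Complex.exp ((-(a * φ) : ℝ) * Complex.I) *
          aeval (Complex.exp (φ * Complex.I)) ((1 + X + X ^ 2 : ℝ[X]) ^ n) =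
        Complex.exp ((-((a - n) * φ) : ℝ) * Complex.I) * ((1 + 2 * Real.cos φ) ^ n : ℝ) := by
    simp only [map_pow, map_add, map_one, aeval_X, one_add_exp_mul_I_add_sq, mul_pow]
    rw [← mul_assoc, ← Complex.exp_nat_mul, ← Complex.exp_add]
    push_cast
    ring_nf
  rw [factorization, Complex.re_mul_ofReal, Complex.exp_ofReal_mul_I_re, Real.cos_neg]

lemma intCast_T (R : Type*) [Ring R] (n k : ℕ) :
    (T n k : R) = ((1 + X + X ^ 2 : R[X]) ^ n).coeff k := by
  have map_trinomial_pow :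
      ((1 + X + X ^ 2 : ℤ[X]) ^ n).map (Int.castRingHom R) = (1 + X + X ^ 2) ^ n := by
    simp [Polynomial.map_pow]
  rw [← map_trinomial_pow, coeff_map, T, eq_intCast]

theorem trinomial_diagonal_integral_representation_general (n k : ℕ) :
    (T n k : ℝ) =
      (1 / π) * ∫ φ in (0 : ℝ)..π, Real.cos ((k - n) * φ) * (1 + 2 * Real.cos φ) ^ n := by
  simp_rw [cos_mul_one_add_two_cos_pow, integral_re_exp_neg_mul_aeval_exp, ← intCast_T]
  field_simp

theorem trinomial_diagonal_integral_representation (n lam : ℕ) :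
    (T n (n + lam) : ℝ) =
      (1 / π) * ∫ φ in (0:ℝ)..π, Real.cos (lam * φ) * (1 + 2 * Real.cos φ) ^ n := by
  simpa using trinomial_diagonal_integral_representation_general n (n + lam)
end

section
/- For every real number b with |b| < 1 and every natural number λ, the Poisson-kernel integral satisfies ∫_0^π cos(λφ) / (1 − 2b·cos φ + b^2) dφ = π · b^λ / (1 − b^2). -/
open Real

/-!
The function `u z = Re (z ^ lam)` is harmonic, so Poisson's formula for the unit disk recovers its
value `b ^ lam` at the real point `b` from its boundary values `cos (lam * φ)`. Both `u` and the
Poisson kernel with real pole are invariant under complex conjugation, which is why the upper half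
of the circle carries half of the integral.
-/

open InnerProductSpace MeasureTheory Metric
open scoped ComplexConjugate

section Reflection

variable {E : Type*} [NormedAddCommGroup E] [NormedSpace ℝ E]

lemma integral_zero_two_mul_of_symm {f : ℝ → E} {a : ℝ} (hf : ∀ x, f (2 * a - x) = f x) :
    ∫ x in 0..2 * a, f x = (2 : ℝ) • ∫ x in 0..a, f x := by
  have hends : 2 * a - a = a := by ring
  by_cases hleft : IntervalIntegrable f volume 0 a
  · have hright : IntervalIntegrable f volume a (2 * a) := by
      simpa only [hf, hends, sub_zero] using (hleft.comp_sub_left (2 * a)).symm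
    have hreflect : ∫ x in 0..a, f x = ∫ x in a..2 * a, f x := by
      simpa only [hf, hends, sub_zero] using
        intervalIntegral.integral_comp_sub_left f (2 * a) (a := 0) (b := a)
    rw [← intervalIntegral.integral_add_adjacent_intervals hleft hright, ← hreflect, two_smul]
  · have hmem : a ∈ Set.uIcc 0 (2 * a) := by grind [Set.mem_uIcc]
    have hwhole : ¬IntervalIntegrable f volume 0 (2 * a) := fun h ↦
      hleft (h.mono_set (Set.uIcc_subset_uIcc_left hmem))
    rw [intervalIntegral.integral_undef hleft, intervalIntegral.integral_undef hwhole, smul_zero]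

lemma circleAverage_eq_integral_zero_pi_of_conj {f : ℂ → E} {c R : ℝ}
    (hf : ∀ z ∈ sphere (c : ℂ) |R|, f (conj z) = f z) :
    circleAverage f c R = π⁻¹ • ∫ θ in 0..π, f (circleMap c R θ) := by
  have hsymm (θ : ℝ) : f (circleMap c R (2 * π - θ)) = f (circleMap c R θ) := by
    rw [(periodic_circleMap _ _).sub_eq', ← Complex.conj_ofReal c, ← conj_circleMap,
      Complex.conj_ofReal, hf _ (circleMap_mem_sphere' _ _ _)]
  rw [circleAverage_def, integral_zero_two_mul_of_symm hsymm, smul_smul, mul_inv_rev,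
    inv_mul_cancel_right₀ two_ne_zero]

end Reflection

lemma poissonKernel_conj (c w z : ℂ) :
    poissonKernel (conj c) (conj w) (conj z) = poissonKernel c w z := by
  simp only [poissonKernel_def, ← map_sub, RCLike.norm_conj]

lemma norm_circleMap_zero_sub_sq (R r θ α : ℝ) :
    ‖circleMap 0 R θ - circleMap 0 r α‖ ^ 2 = R ^ 2 - 2 * R * r * cos (θ - α) + r ^ 2 := by
  rw [← Complex.normSq_eq_norm_sq, Complex.normSq_apply, Complex.sub_re, Complex.sub_im, cos_sub]
  simp only [circleMap_zero_re, circleMap_zero_im]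
  linear_combination R ^ 2 * sin_sq_add_cos_sq θ + r ^ 2 * sin_sq_add_cos_sq α

lemma poissonKernel_circleMap (c : ℂ) (r R α θ : ℝ) :
    poissonKernel c (circleMap c r α) (circleMap c R θ) =
      (R ^ 2 - r ^ 2) / (R ^ 2 - 2 * R * r * cos (θ - α) + r ^ 2) := by
  simp only [poissonKernel_def, circleMap_sub_center, norm_circleMap_zero, sq_abs,
    norm_circleMap_zero_sub_sq]

lemma poissonKernel_zero_ofReal_circleMap (b R θ : ℝ) :
    poissonKernel 0 b (circleMap 0 R θ) =
      (R ^ 2 - b ^ 2) / (R ^ 2 - 2 * R * b * cos θ + b ^ 2) := by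
  simpa only [circleMap_zero, Complex.ofReal_zero, zero_mul, Complex.exp_zero, mul_one, sub_zero]
    using poissonKernel_circleMap 0 b R 0 θ

lemma integral_zero_pi_poissonKernel_mul_of_conj {u : ℂ → ℝ} {c R b : ℝ}
    (hu : HarmonicContOnCl u (ball (c : ℂ) R)) (hb : (b : ℂ) ∈ ball (c : ℂ) R)
    (hconj : ∀ z ∈ sphere (c : ℂ) |R|, u (conj z) = u z) :
    ∫ θ in 0..π, poissonKernel c b (circleMap c R θ) * u (circleMap c R θ) = π * u b := by
  have hkernel (z : ℂ) : poissonKernel (c : ℂ) b (conj z) = poissonKernel c b z := by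
    simpa only [Complex.conj_ofReal] using poissonKernel_conj c b z
  have hformula := hu.circleAverage_poissonKernel_smul hb
  rw [circleAverage_eq_integral_zero_pi_of_conj fun z hz ↦ by
    simp only [Pi.smul_apply', hkernel, hconj z hz]] at hformula
  simpa only [Pi.smul_apply', smul_eq_mul] using (inv_mul_eq_iff_eq_mul₀ pi_ne_zero).1 hformula

lemma harmonicOnNhd_re_pow (n : ℕ) (s : Set ℂ) : HarmonicOnNhd (fun z : ℂ ↦ (z ^ n).re) s :=
  fun _ _ ↦ (analyticAt_id.pow n).harmonicAt_re

lemma re_circleMap_zero_pow (R θ : ℝ) (n : ℕ) :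
    (circleMap 0 R θ ^ n).re = R ^ n * cos (n * θ) := by
  rw [circleMap_zero_pow, circleMap_zero_re]

theorem poisson_kernel_integral (b : ℝ) (hb : |b| < 1) (lam : ℕ) :
    ∫ φ in (0:ℝ)..π, Real.cos (lam * φ) / (1 - 2 * b * Real.cos φ + b ^ 2) =
      π * b ^ lam / (1 - b ^ 2) := by
  have hb2 : 1 - b ^ 2 ≠ 0 := (sub_pos.2 ((sq_lt_one_iff_abs_lt_one b).2 hb)).ne'
  have hball : (b : ℂ) ∈ ball ((0 : ℝ) : ℂ) 1 := by simpa using hb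
  have hintegrand (φ : ℝ) :
      poissonKernel 0 b (circleMap 0 1 φ) * (circleMap 0 1 φ ^ lam).re =
        cos (lam * φ) / (1 - 2 * b * cos φ + b ^ 2) * (1 - b ^ 2) := by
    rw [poissonKernel_zero_ofReal_circleMap, re_circleMap_zero_pow]
    ring
  have hformula := integral_zero_pi_poissonKernel_mul_of_conj
    (harmonicOnNhd_re_pow lam _).harmonicContOnCl hball
    fun z _ ↦ by rw [← map_pow, Complex.conj_re]
  simp only [Complex.ofReal_zero, hintegrand, intervalIntegral.integral_mul_const,
    ← Complex.ofReal_pow, Complex.ofReal_re] at hformula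
  exact eq_div_of_mul_eq hb2 hformula
end
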